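/- For every real p > 4 there exists a constant C_p > 0 such that for all 0 ≤ s ≤ t and all x, y ∈ [0,1], ( ∫₀ᵗ ( ∫₀¹ (G_{t−r}(x,z) − G_{s−r}(y,z))² dz )^{p/(p−2)} dr )^{(p−2)/2} ≤ C_p ( |x−y|^{(p−4)/2} + |t−s|^{(p−4)/4} ). -/

import Mathlib

/-!
Put `q = p/(p-2) ∈ (1,2)`, `h = t - s` and `D = h + (x-y)²`, and let `F(r)` be the inner (spatial)
integral. By Parseval's identity for sine series (`integral_sq_sine_tsum`), `F(r)` is a series in
`e^{-π²n²(t-r)}` and `e^{-π²n²(s-r)}`. The bound `∑ e^{-π²n²u} ≤ u^{-1/2}/2` (`theta_bound`) yields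

* `F(r) ≤ 4 min(u^{-1/2}, D u^{-3/2})` with `u = s - r`, when `r < s` (`past_bound`);
* `F(r) ≤ (t-r)^{-1/2}`, when `s ≤ r < t` (`recent_bound`).

Raising to the power `q` and integrating, with the first range split at `u = D`, gives a bound
`K D^{1-q/2}` (`time_integral_bound`); convergence at `0` uses `q < 2`, at infinity `q > 2/3`.
Finally `(1 - q/2)(p-2)/2 = (p-4)/4`, and `D^{(p-4)/4}` is at most a constant times
`|x-y|^{(p-4)/2} + h^{(p-4)/4}`.
-/

open Real MeasureTheory Set

/-- The Dirichlet heat kernel on `[0,1]`: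
`G t x y = ∑_{n=1}^∞ 2 e^{−π²n²t} sin(nπx) sin(nπy)` for `t > 0`, and `0` for `t ≤ 0`. -/
noncomputable def G (t x y : ℝ) : ℝ :=
  if 0 < t then
    ∑' n : ℕ, 2 * Real.exp (-(Real.pi ^ 2) * ((n : ℝ) + 1) ^ 2 * t)
      * Real.sin (((n : ℝ) + 1) * Real.pi * x) * Real.sin (((n : ℝ) + 1) * Real.pi * y)
  else 0

/-! ### Parseval for sine series -/

lemma integral_sin_mul_sin (m n : ℕ) :
    ∫ z in Set.Icc (0 : ℝ) 1, sin (((m : ℝ) + 1) * π * z) * sin (((n : ℝ) + 1) * π * z)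
      = if m = n then 1 / 2 else 0 := by
  rw [integral_Icc_eq_integral_Ioc, ← intervalIntegral.integral_of_le zero_le_one]
  have hcos : ∀ k : ℤ, k ≠ 0 → ∫ z in (0 : ℝ)..1, cos ((k * π) * z) = 0 := by
    intro k hk
    have hk' : (k : ℝ) * π ≠ 0 := mul_ne_zero (by exact_mod_cast hk) pi_ne_zero
    rw [intervalIntegral.integral_comp_mul_left (fun z => cos z) hk']
    simp [integral_cos, sin_int_mul_pi]
  have hprod : ∀ z : ℝ, sin (((m : ℝ) + 1) * π * z) * sin (((n : ℝ) + 1) * π * z)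
      = (1 / 2) * cos (((((m : ℤ) - n : ℤ) : ℝ) * π) * z)
        - (1 / 2) * cos (((((m : ℤ) + n + 2 : ℤ) : ℝ) * π) * z) := by
    intro z
    have e1 : ((((m : ℤ) - n : ℤ) : ℝ) * π) * z
        = ((m : ℝ) + 1) * π * z - ((n : ℝ) + 1) * π * z := by push_cast; ring
    have e2 : ((((m : ℤ) + n + 2 : ℤ) : ℝ) * π) * z
        = ((m : ℝ) + 1) * π * z + ((n : ℝ) + 1) * π * z := by push_cast; ring
    rw [e1, e2, cos_sub, cos_add]; ring
  simp_rw [hprod]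
  rw [intervalIntegral.integral_sub (Continuous.intervalIntegrable (by fun_prop) _ _)
    (Continuous.intervalIntegrable (by fun_prop) _ _),
    intervalIntegral.integral_const_mul, intervalIntegral.integral_const_mul,
    hcos ((m : ℤ) + n + 2) (by omega)]
  split_ifs with h
  · subst h; simp
  · rw [hcos _ (by omega)]; simp

lemma integral_sq_sine_sum (a : ℕ → ℝ) (N : ℕ) :
    ∫ z in Set.Icc (0 : ℝ) 1, (∑ n ∈ Finset.range N, a n * sin (((n : ℝ) + 1) * π * z)) ^ 2
      = 1 / 2 * ∑ n ∈ Finset.range N, a n ^ 2 := by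
  have hexp : ∀ z : ℝ, (∑ n ∈ Finset.range N, a n * sin (((n : ℝ) + 1) * π * z)) ^ 2
      = ∑ m ∈ Finset.range N, ∑ n ∈ Finset.range N, (a m * a n) *
        (sin (((m : ℝ) + 1) * π * z) * sin (((n : ℝ) + 1) * π * z)) := by
    intro z
    rw [sq, Finset.sum_mul_sum]
    exact Finset.sum_congr rfl fun m _ => Finset.sum_congr rfl fun n _ => by ring
  simp_rw [hexp]
  rw [integral_finsetSum _ fun m _ => Continuous.integrableOn_Icc (by fun_prop)]
  simp_rw [Finset.mul_sum]
  refine Finset.sum_congr rfl fun m hm => ?_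
  rw [integral_finsetSum _ fun n _ => Continuous.integrableOn_Icc (by fun_prop)]
  simp_rw [integral_const_mul, integral_sin_mul_sin]
  simp only [mul_ite, mul_zero, Finset.sum_ite_eq, hm, if_true]
  ring

/-- Parseval's identity for absolutely convergent sine series. -/
lemma integral_sq_sine_tsum (a : ℕ → ℝ) (ha : Summable fun n => |a n|) :
    ∫ z in Set.Icc (0 : ℝ) 1, (∑' n, a n * sin (((n : ℝ) + 1) * π * z)) ^ 2
      = 1 / 2 * ∑' n, a n ^ 2 := by
  have hle : ∀ (z : ℝ) (n : ℕ), |a n * sin (((n : ℝ) + 1) * π * z)| ≤ |a n| := fun z n => by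
    rw [abs_mul]
    exact mul_le_of_le_one_right (abs_nonneg _) (abs_sin_le_one _)
  have hsq : Summable fun n => a n ^ 2 := by
    have h0 := ha.mul_of_nonneg ha (fun _ => abs_nonneg _) (fun _ => abs_nonneg _)
    have := h0.comp_injective (i := fun n : ℕ => (n, n)) (fun x y h => (Prod.mk.inj h).1)
    refine this.congr fun n => ?_
    simp [sq]
  have h1 : Filter.Tendsto (fun N : ℕ => ∫ z in Set.Icc (0 : ℝ) 1,
      (∑ n ∈ Finset.range N, a n * sin (((n : ℝ) + 1) * π * z)) ^ 2) Filter.atTop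
      (nhds (∫ z in Set.Icc (0 : ℝ) 1, (∑' n, a n * sin (((n : ℝ) + 1) * π * z)) ^ 2)) := by
    refine tendsto_integral_of_dominated_convergence (fun _ => (∑' n, |a n|) ^ 2)
      (fun N => Continuous.aestronglyMeasurable (by fun_prop)) ?_ ?_ ?_
    · exact continuous_const.integrableOn_Icc
    · intro N
      refine Filter.Eventually.of_forall fun z => ?_
      rw [norm_pow, Real.norm_eq_abs]
      refine pow_le_pow_left₀ (abs_nonneg _) ?_ 2
      calc _ ≤ ∑ n ∈ Finset.range N, |a n * sin (((n : ℝ) + 1) * π * z)| :=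
            Finset.abs_sum_le_sum_abs _ _
        _ ≤ ∑ n ∈ Finset.range N, |a n| := Finset.sum_le_sum fun n _ => hle z n
        _ ≤ _ := ha.sum_le_tsum _ fun n _ => abs_nonneg _
    · refine Filter.Eventually.of_forall fun z => ?_
      exact ((Summable.of_norm_bounded ha (hle z)).hasSum.tendsto_sum_nat).pow 2
  simp_rw [integral_sq_sine_sum] at h1
  exact tendsto_nhds_unique h1 (hsq.hasSum.tendsto_sum_nat.const_mul _)

/-! ### The theta series -/

/-- Integral comparison for `∑ 1 / (1 + (nw)²)` in telescoping form: summing over `n` bounds the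
series by `π / (2w)`. -/
lemma inv_one_add_sq_le_arctan_sub (w : ℝ) (hw : 0 < w) (n : ℕ) :
    1 / (1 + (((n : ℝ) + 1) * w) ^ 2)
      ≤ (arctan (((n + 1 : ℕ) : ℝ) * w) - arctan ((n : ℝ) * w)) / w := by
  rw [le_div_iff₀ hw]
  have hlt : (n : ℝ) * w < ((n + 1 : ℕ) : ℝ) * w := by push_cast; nlinarith
  obtain ⟨c, ⟨hc1, hc2⟩, hc⟩ := exists_hasDerivAt_eq_slope arctan (fun v => 1 / (1 + v ^ 2)) hlt
    continuous_arctan.continuousOn (fun v _ => hasDerivAt_arctan v)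
  have hden : ((n + 1 : ℕ) : ℝ) * w - n * w = w := by push_cast; ring
  rw [hden, eq_div_iff hw.ne'] at hc
  rw [← hc]
  push_cast at hc2
  have hc0 : 0 ≤ c := le_trans (by positivity) hc1.le
  gcongr

/-- Since `e^{-v} ≤ 1 / (1 + v)`, the terms are dominated by the telescoping `arctan` differences
with step `w = π √u`, and `arctan < π / 2` gives the constant `1 / 2`. -/
lemma theta_bound (u : ℝ) (hu : 0 < u) :
    (Summable fun n : ℕ => exp (-(π ^ 2) * ((n : ℝ) + 1) ^ 2 * u)) ∧
    ∑' n : ℕ, exp (-(π ^ 2) * ((n : ℝ) + 1) ^ 2 * u) ≤ 1 / 2 * u ^ (-(1 / 2) : ℝ) := by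
  have hs : 0 < √u := sqrt_pos.2 hu
  have hw : 0 < π * √u := mul_pos pi_pos hs
  have hterm : ∀ n : ℕ, exp (-(π ^ 2) * ((n : ℝ) + 1) ^ 2 * u)
      ≤ (arctan (((n + 1 : ℕ) : ℝ) * (π * √u)) - arctan ((n : ℝ) * (π * √u))) / (π * √u) := by
    intro n
    refine le_trans ?_ (inv_one_add_sq_le_arctan_sub _ hw n)
    have e : (((n : ℝ) + 1) * (π * √u)) ^ 2 = π ^ 2 * ((n : ℝ) + 1) ^ 2 * u := by
      rw [mul_pow, mul_pow, sq_sqrt hu.le]; ring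
    rw [e, neg_mul, neg_mul, exp_neg, ← one_div]
    refine one_div_le_one_div_of_le (by positivity) ?_
    rw [add_comm]
    exact add_one_le_exp _
  have hpart : ∀ N : ℕ, ∑ n ∈ Finset.range N, exp (-(π ^ 2) * ((n : ℝ) + 1) ^ 2 * u)
      ≤ 1 / 2 * u ^ (-(1 / 2) : ℝ) := by
    intro N
    refine (Finset.sum_le_sum fun n _ => hterm n).trans ?_
    rw [← Finset.sum_div, Finset.sum_range_sub (fun n : ℕ => arctan ((n : ℝ) * (π * √u))),
      rpow_neg hu.le, ← sqrt_eq_rpow]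
    simp only [Nat.cast_zero, zero_mul, arctan_zero, sub_zero]
    rw [div_le_iff₀ hw]
    have := (arctan_lt_pi_div_two ((N : ℝ) * (π * √u))).le
    refine this.trans (le_of_eq ?_)
    field_simp
  have hsum := summable_of_sum_range_le (fun n => (exp_pos _).le) hpart
  exact ⟨hsum, hsum.tsum_le_of_sum_range_le hpart⟩

/-- Energy bound: Parseval combined with the bound on the theta series. -/
lemma energy_bound (a : ℕ → ℝ) (ha : Summable fun n => |a n|) (u c : ℝ) (hu : 0 < u)
    (hac : ∀ n : ℕ, a n ^ 2 ≤ c * exp (-(π ^ 2) * ((n : ℝ) + 1) ^ 2 * u)) :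
    ∫ z in Set.Icc (0 : ℝ) 1, (∑' n, a n * sin (((n : ℝ) + 1) * π * z)) ^ 2
      ≤ c / 4 * u ^ (-(1 / 2) : ℝ) := by
  obtain ⟨hs, hb⟩ := theta_bound u hu
  have hc : 0 ≤ c := by
    by_contra h
    have := (sq_nonneg _).trans (hac 0)
    nlinarith [exp_pos (-(π ^ 2) * (((0 : ℕ) : ℝ) + 1) ^ 2 * u)]
  have hs' := hs.mul_left c
  have h1 : ∑' n, a n ^ 2 ≤ c * (1 / 2 * u ^ (-(1 / 2) : ℝ)) := by
    refine (Summable.tsum_le_tsum hac (Summable.of_nonneg_of_le (fun _ => sq_nonneg _) hac hs')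
      hs').trans ?_
    rw [tsum_mul_left]
    gcongr
  rw [integral_sq_sine_tsum a ha]
  linarith

/-! ### Spatial energy bounds -/

/-- Energy of the kernel at times `r ∈ [s, t)`, where `G_{s-r}` vanishes; here `v = t - r`. -/
lemma recent_bound (v x : ℝ) (hv : 0 < v) :
    ∫ z in Set.Icc (0 : ℝ) 1, (G v x z) ^ 2 ≤ v ^ (-(1 / 2) : ℝ) := by
  have hs := (theta_bound v hv).1
  set a : ℕ → ℝ := fun n => 2 * exp (-(π ^ 2) * ((n : ℝ) + 1) ^ 2 * v)
    * sin (((n : ℝ) + 1) * π * x) with ha_def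
  have habs : ∀ n : ℕ, |a n| ≤ 2 * exp (-(π ^ 2) * ((n : ℝ) + 1) ^ 2 * v) := by
    intro n
    rw [ha_def, abs_mul, abs_of_pos (by positivity)]
    exact mul_le_of_le_one_right (by positivity) (abs_sin_le_one _)
  have ha : Summable fun n => |a n| :=
    Summable.of_nonneg_of_le (fun _ => abs_nonneg _) habs (hs.mul_left 2)
  have key := energy_bound a ha v 4 hv fun n => by
    have hE : exp (-(π ^ 2) * ((n : ℝ) + 1) ^ 2 * v) ≤ 1 := by
      rw [exp_le_one_iff, neg_mul, neg_mul, neg_nonpos]; positivity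
    have h0 := exp_pos (-(π ^ 2) * ((n : ℝ) + 1) ^ 2 * v)
    rw [← sq_abs]
    nlinarith [habs n, abs_nonneg (a n)]
  have hG : ∀ z, G v x z = ∑' n, a n * sin (((n : ℝ) + 1) * π * z) := fun z => by
    rw [G, if_pos hv]
  simp_rw [hG]
  linarith

lemma one_sub_exp_neg_sq_le (v : ℝ) (hv : 0 ≤ v) : (1 - exp (-v)) ^ 2 ≤ v := by
  have h1 := add_one_le_exp (-v)
  have h2 := exp_pos (-v)
  have h3 : exp (-v) ≤ 1 := by rw [exp_le_one_iff]; linarith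
  nlinarith

lemma sq_sin_sub_sin_le (v w : ℝ) : (sin v - sin w) ^ 2 ≤ (v - w) ^ 2 := by
  rw [sq_le_sq]
  simpa [Real.dist_eq] using lipschitzWith_sin.dist_le_mul v w

/-- Energy of the kernel difference at times `r < s`, with `u = s - r` and `h = t - s`. With
`λ = π²(n+1)²` the sine coefficient is
`2 e^{-λu} ((e^{-λh} - 1) sin(√λ x) + (sin(√λ x) - sin(√λ y)))`. Bounding the bracket by a constant
gives the first estimate; bounding its square by `2λ (h + (x-y)²)` gives the second. -/
lemma past_bound (u h x y : ℝ) (hu : 0 < u) (hh : 0 ≤ h) :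
    ∫ z in Set.Icc (0 : ℝ) 1, (G (u + h) x z - G u y z) ^ 2 ≤ 4 * u ^ (-(1 / 2) : ℝ) ∧
    ∫ z in Set.Icc (0 : ℝ) 1, (G (u + h) x z - G u y z) ^ 2
      ≤ 4 * ((h + (x - y) ^ 2) * u ^ (-(3 / 2) : ℝ)) := by
  have hs := (theta_bound u hu).1
  set E : ℕ → ℝ := fun n => exp (-(π ^ 2) * ((n : ℝ) + 1) ^ 2 * u) with hE_def
  have hE0 : ∀ n, 0 < E n := fun n => exp_pos _
  have hE1 : ∀ n, E n ≤ 1 := fun n => by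
    simp only [hE_def]
    rw [exp_le_one_iff, neg_mul, neg_mul, neg_nonpos]; positivity
  set H : ℕ → ℝ := fun n => exp (-(π ^ 2 * ((n : ℝ) + 1) ^ 2 * h)) with hH_def
  have hH0 : ∀ n, 0 < H n := fun n => exp_pos _
  have hH1 : ∀ n, H n ≤ 1 := fun n => by
    simp only [hH_def]
    rw [exp_le_one_iff, neg_nonpos]; positivity
  have hEH : ∀ n : ℕ, exp (-(π ^ 2) * ((n : ℝ) + 1) ^ 2 * (u + h)) = E n * H n := fun n => by
    simp only [hE_def, hH_def]
    rw [← exp_add]; congr 1; ring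
  set X : ℕ → ℝ := fun n => sin (((n : ℝ) + 1) * π * x) with hX_def
  set Y : ℕ → ℝ := fun n => sin (((n : ℝ) + 1) * π * y) with hY_def
  have hX : ∀ n, |X n| ≤ 1 := fun n => abs_sin_le_one _
  have hY : ∀ n, |Y n| ≤ 1 := fun n => abs_sin_le_one _
  set a : ℕ → ℝ := fun n => 2 * E n * (H n * X n - Y n) with ha_def
  have habs : ∀ n : ℕ, |a n| ≤ 4 * E n := by
    intro n
    have h1 : |H n * X n| ≤ 1 := by
      rw [abs_mul, abs_of_pos (hH0 n)]
      exact mul_le_one₀ (hH1 n) (abs_nonneg _) (hX n)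
    have h2 : |H n * X n - Y n| ≤ 2 := (abs_sub _ _).trans (by linarith [hY n])
    have h3 : 0 < 2 * E n := by linarith [hE0 n]
    simp only [ha_def]
    rw [abs_mul, abs_of_pos h3]
    nlinarith
  have ha : Summable fun n => |a n| :=
    Summable.of_nonneg_of_le (fun _ => abs_nonneg _) habs (hs.mul_left 4)
  have hG : ∀ z, G (u + h) x z - G u y z = ∑' n, a n * sin (((n : ℝ) + 1) * π * z) := fun z => by
    rw [G, G, if_pos hu, if_pos (by linarith)]
    have hb : ∀ (c θ : ℕ → ℝ), (∀ n, |c n| ≤ 2 * E n) → Summable fun n => c n * sin (θ n) :=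
      fun c θ hc => Summable.of_norm_bounded (hs.mul_left 2) fun n => by
        rw [norm_mul, Real.norm_eq_abs, Real.norm_eq_abs]
        exact (mul_le_of_le_one_right (abs_nonneg _) (abs_sin_le_one _)).trans (hc n)
    rw [← Summable.tsum_sub]
    · refine tsum_congr fun n => ?_
      rw [hEH]
      simp only [ha_def, hX_def, hY_def, hE_def]
      ring
    · refine hb _ _ fun n => ?_
      rw [hEH, abs_mul, abs_of_pos (by have := hE0 n; have := hH0 n; positivity)]
      have := mul_le_mul (hH1 n) (hX n) (abs_nonneg _) zero_le_one
      have := hE0 n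
      calc 2 * (E n * H n) * |X n| = 2 * E n * (H n * |X n|) := by ring
        _ ≤ 2 * E n * (1 * 1) := by gcongr
        _ = _ := by ring
    · refine hb _ _ fun n => ?_
      rw [abs_mul, abs_of_pos (by have := hE0 n; positivity)]
      exact mul_le_of_le_one_right (by have := hE0 n; positivity) (hY n)
  simp_rw [hG]
  constructor
  · refine (energy_bound a ha u 16 hu fun n => ?_).trans (by norm_num)
    have h0 := hE0 n
    have h1 := hE1 n
    rw [← sq_abs]
    change _ ≤ 16 * E n
    nlinarith [habs n, abs_nonneg (a n)]
  · refine (energy_bound a ha u (8 * (h + (x - y) ^ 2) / u) hu fun n => ?_).trans ?_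
    · have h0 := hE0 n
      set L := π ^ 2 * ((n : ℝ) + 1) ^ 2 with hL
      have hL0 : 0 ≤ L := by positivity
      have hd : (H n * X n - Y n) ^ 2 ≤ 2 * (L * (h + (x - y) ^ 2)) := by
        have i1 : (1 - H n) ^ 2 ≤ L * h := one_sub_exp_neg_sq_le _ (by positivity)
        have i2 : (X n - Y n) ^ 2 ≤ L * (x - y) ^ 2 := by
          refine (sq_sin_sub_sin_le _ _).trans (le_of_eq ?_)
          rw [hL]; ring
        have i3 : X n ^ 2 ≤ 1 := by rw [← sq_abs]; nlinarith [hX n, abs_nonneg (X n)]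
        have i4 : ((1 - H n) * X n) ^ 2 ≤ L * h := by
          rw [mul_pow]; nlinarith [sq_nonneg (1 - H n)]
        nlinarith [sq_nonneg ((1 - H n) * X n + (X n - Y n))]
      -- `λ e^{-λu} ≤ 1/u`, which trades one exponential factor for the extra power of `u`
      have hLE : L * E n ≤ 1 / u := by
        rw [le_div_iff₀ hu]
        have h1 := add_one_le_exp (L * u)
        have h2 : E n * exp (L * u) = 1 := by
          simp only [hE_def, hL]
          rw [← exp_add, exp_eq_one_iff]; ring
        nlinarith
      have hD : 0 ≤ h + (x - y) ^ 2 := by positivity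
      change _ ≤ _ * E n
      calc a n ^ 2 = 4 * E n * E n * (H n * X n - Y n) ^ 2 := by simp only [ha_def]; ring
        _ ≤ 4 * E n * E n * (2 * (L * (h + (x - y) ^ 2))) := by gcongr
        _ = 8 * (h + (x - y) ^ 2) * E n * (L * E n) := by ring
        _ ≤ 8 * (h + (x - y) ^ 2) * E n * (1 / u) := by gcongr
        _ = _ := by ring
    · have e : u ^ (-(3 / 2) : ℝ) = u ^ (-(1 / 2) : ℝ) / u := by
        rw [← rpow_sub_one hu.ne']; norm_num
      have hp : 0 ≤ (h + (x - y) ^ 2) * (u ^ (-(1 / 2) : ℝ) / u) := by positivity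
      rw [e]
      calc _ = 2 * ((h + (x - y) ^ 2) * (u ^ (-(1 / 2) : ℝ) / u)) := by ring
        _ ≤ _ := by linarith

/-! ### Integration in time -/

lemma near_integral (q D : ℝ) (hq2 : q < 2) (hD : 0 ≤ D) :
    IntegrableOn (fun u : ℝ => u ^ (-(q / 2))) (Ioc 0 D) ∧
    ∫ u in Ioc 0 D, u ^ (-(q / 2)) = D ^ (1 - q / 2) / (1 - q / 2) := by
  constructor
  · exact (intervalIntegrable_iff_integrableOn_Ioc_of_le hD).1
      (intervalIntegral.intervalIntegrable_rpow' (by linarith))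
  · rw [← intervalIntegral.integral_of_le hD, integral_rpow (Or.inl (by linarith)),
      zero_rpow (by linarith)]
    ring_nf

lemma far_integral (q D : ℝ) (hq1 : 1 < q) (hD : 0 < D) :
    IntegrableOn (fun u : ℝ => D ^ q * u ^ (-(3 * q / 2))) (Ioi D) ∧
    ∫ u in Ioi D, D ^ q * u ^ (-(3 * q / 2)) = D ^ (1 - q / 2) / (3 * q / 2 - 1) := by
  constructor
  · exact (integrableOn_Ioi_rpow_of_lt (by linarith) hD).const_mul _
  · rw [integral_const_mul, integral_Ioi_rpow_of_lt (by linarith) hD]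
    have e : D ^ (1 - q / 2) = D ^ q * D ^ (-(3 * q / 2) + 1) := by
      rw [← rpow_add hD]; ring_nf
    rw [e, neg_div, ← div_neg]
    ring_nf

/-- The time integral is dominated by `∫ m(s-r) dr + ∫ k(t-r) dr` over the whole line, where `m`
equals `4^q u^{-q/2}` for `0 < u ≤ D` and `4^q D^q u^{-3q/2}` for `u > D := (t-s) + (x-y)²`, and
`k(v) = v^{-q/2}` on `(0, t-s]`; elsewhere both vanish. No integrability of the left-hand integrand is needed, since
its Bochner integral is `0` otherwise. -/
lemma time_integral_bound (q s t x y : ℝ) (hq1 : 1 < q) (hq2 : q < 2) (hst : s ≤ t)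
    (hD : 0 < (t - s) + (x - y) ^ 2) :
    ∫ r in Set.Icc (0 : ℝ) t,
        (∫ z in Set.Icc (0 : ℝ) 1, (G (t - r) x z - G (s - r) y z) ^ 2) ^ q
      ≤ (4 ^ q * (1 / (1 - q / 2) + 1 / (3 * q / 2 - 1)) + 1 / (1 - q / 2))
        * ((t - s) + (x - y) ^ 2) ^ (1 - q / 2) := by
  set h := t - s with hh
  have hh0 : 0 ≤ h := by linarith
  set D := h + (x - y) ^ 2 with hDdef
  have hhD : h ≤ D := by rw [hDdef]; nlinarith [sq_nonneg (x - y)]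
  obtain ⟨n1, n2⟩ := near_integral q D hq2 hD.le
  obtain ⟨f1, f2⟩ := far_integral q D hq1 hD
  obtain ⟨k1, k2⟩ := near_integral q h hq2 hh0
  set m1 : ℝ → ℝ := (Ioc 0 D).indicator fun u : ℝ => u ^ (-(q / 2)) with hm1
  set m2 : ℝ → ℝ := (Ioi D).indicator fun u : ℝ => D ^ q * u ^ (-(3 * q / 2)) with hm2
  set k : ℝ → ℝ := (Ioc 0 h).indicator fun u : ℝ => u ^ (-(q / 2)) with hk
  have im1 : Integrable m1 := (integrable_indicator_iff measurableSet_Ioc).2 n1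
  have im2 : Integrable m2 := (integrable_indicator_iff measurableSet_Ioi).2 f1
  have ik : Integrable k := (integrable_indicator_iff measurableSet_Ioc).2 k1
  have pm1 : ∀ u, 0 ≤ m1 u := fun u => indicator_nonneg (fun v hv => rpow_nonneg hv.1.le _) u
  have pm2 : ∀ u, 0 ≤ m2 u := fun u => indicator_nonneg (fun v hv =>
    mul_nonneg (rpow_nonneg hD.le _) (rpow_nonneg (hD.trans hv).le _)) u
  have pk : ∀ u, 0 ≤ k u := fun u => indicator_nonneg (fun v hv => rpow_nonneg hv.1.le _) u
  set g : ℝ → ℝ := fun r => 4 ^ q * (m1 (s - r) + m2 (s - r)) + k (t - r) with hg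
  have i1 : Integrable fun r => 4 ^ q * (m1 (s - r) + m2 (s - r)) :=
    ((im1.comp_sub_left s).add (im2.comp_sub_left s)).const_mul _
  have i2 : Integrable fun r => k (t - r) := ik.comp_sub_left t
  have ig : Integrable g := i1.add i2
  have pg : ∀ r, 0 ≤ g r := fun r => by
    have := pm1 (s - r); have := pm2 (s - r); have := pk (t - r)
    simp only [hg]; positivity
  have hF0 : ∀ r, 0 ≤ ∫ z in Set.Icc (0 : ℝ) 1, (G (t - r) x z - G (s - r) y z) ^ 2 :=
    fun r => integral_nonneg fun z => sq_nonneg _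
  have hFg : ∀ r, (∫ z in Set.Icc (0 : ℝ) 1, (G (t - r) x z - G (s - r) y z) ^ 2) ^ q ≤ g r := by
    intro r
    have hF := hF0 r
    rcases lt_or_ge r s with hr | hr
    · have hu : 0 < s - r := by linarith
      obtain ⟨b1, b2⟩ := past_bound (s - r) h x y hu hh0
      rw [show s - r + h = t - r by rw [hh]; ring] at b1 b2
      have hkk := pk (t - r)
      suffices H : (∫ z in Set.Icc (0 : ℝ) 1, (G (t - r) x z - G (s - r) y z) ^ 2) ^ q
          ≤ 4 ^ q * (m1 (s - r) + m2 (s - r)) by simp only [hg]; linarith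
      rcases le_or_gt (s - r) D with hle | hgt
      · have e1 : m1 (s - r) = (s - r) ^ (-(q / 2)) :=
          indicator_of_mem (show s - r ∈ Ioc 0 D from ⟨hu, hle⟩) _
        have e2 : m2 (s - r) = 0 := indicator_of_notMem (by simpa using hle) _
        rw [e1, e2, add_zero]
        refine (rpow_le_rpow hF b1 (by linarith)).trans (le_of_eq ?_)
        rw [mul_rpow (by norm_num) (by positivity), ← rpow_mul hu.le]
        ring_nf
      · have e1 : m1 (s - r) = 0 := indicator_of_notMem (fun hm => absurd hm.2 (by linarith)) _
        have e2 : m2 (s - r) = D ^ q * (s - r) ^ (-(3 * q / 2)) :=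
          indicator_of_mem (show s - r ∈ Ioi D from hgt) _
        rw [e1, e2, zero_add]
        refine (rpow_le_rpow hF b2 (by linarith)).trans (le_of_eq ?_)
        rw [mul_rpow (by norm_num) (by positivity), mul_rpow hD.le (by positivity),
          ← rpow_mul hu.le]
        ring_nf
    · have hG0 : ∀ z, G (s - r) y z = 0 := fun z => by rw [G, if_neg (by linarith)]
      simp_rw [hG0, sub_zero] at hF ⊢
      rcases lt_or_ge r t with hrt | hrt
      · have hv : 0 < t - r := by linarith
        have e : k (t - r) = (t - r) ^ (-(q / 2)) :=
          indicator_of_mem (show t - r ∈ Ioc 0 h from ⟨hv, by rw [hh]; linarith⟩) _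
        have := pm1 (s - r)
        have := pm2 (s - r)
        have h4 : 0 ≤ (4 : ℝ) ^ q * (m1 (s - r) + m2 (s - r)) := by positivity
        have hle : (∫ z in Set.Icc (0 : ℝ) 1, G (t - r) x z ^ 2) ^ q ≤ k (t - r) := by
          refine (rpow_le_rpow hF (recent_bound (t - r) x hv) (by linarith)).trans (le_of_eq ?_)
          rw [e, ← rpow_mul hv.le]
          ring_nf
        simp only [hg]
        linarith
      · have hG1 : ∀ z, G (t - r) x z = 0 := fun z => by rw [G, if_neg (by linarith)]
        simp only [hG1]
        simpa [zero_rpow (show q ≠ 0 by linarith)] using pg r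
  calc _ ≤ ∫ r in Set.Icc (0 : ℝ) t, g r :=
        integral_mono_of_nonneg (Filter.Eventually.of_forall fun r => rpow_nonneg (hF0 r) _)
          ig.integrableOn (Filter.Eventually.of_forall hFg)
    _ ≤ ∫ r, g r := setIntegral_le_integral ig (Filter.Eventually.of_forall pg)
    _ = 4 ^ q * ((∫ u, m1 u) + ∫ u, m2 u) + ∫ u, k u := by
        simp only [hg]
        rw [integral_add i1 i2, integral_const_mul,
          integral_add (im1.comp_sub_left s) (im2.comp_sub_left s),
          integral_sub_left_eq_self m1, integral_sub_left_eq_self m2, integral_sub_left_eq_self k]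
    _ = 4 ^ q * (D ^ (1 - q / 2) / (1 - q / 2) + D ^ (1 - q / 2) / (3 * q / 2 - 1))
          + h ^ (1 - q / 2) / (1 - q / 2) := by
        rw [hm1, hm2, hk, integral_indicator measurableSet_Ioc, integral_indicator measurableSet_Ioi,
          integral_indicator measurableSet_Ioc, n2, f2, k2]
    _ ≤ 4 ^ q * (D ^ (1 - q / 2) / (1 - q / 2) + D ^ (1 - q / 2) / (3 * q / 2 - 1))
          + D ^ (1 - q / 2) / (1 - q / 2) := by
        have : 0 < 1 - q / 2 := by linarith
        gcongr
    _ = _ := by ring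

lemma add_sq_rpow_le (h d β : ℝ) (hh : 0 ≤ h) (hβ : 0 < β) :
    (h + d ^ 2) ^ β ≤ 2 ^ β * (|d| ^ (2 * β) + h ^ β) := by
  have e : |d| ^ (2 * β) = (d ^ 2) ^ β := by
    rw [rpow_mul (abs_nonneg _), rpow_two, sq_abs]
  have hd := sq_nonneg d
  rw [e]
  have h1 : 0 ≤ (d ^ 2) ^ β := by positivity
  have h2 : 0 ≤ h ^ β := by positivity
  rcases le_total h (d ^ 2) with hle | hle
  · calc (h + d ^ 2) ^ β ≤ (2 * d ^ 2) ^ β := by gcongr; linarith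
      _ = 2 ^ β * (d ^ 2) ^ β := mul_rpow (by norm_num) hd
      _ ≤ _ := by gcongr; linarith
  · calc (h + d ^ 2) ^ β ≤ (2 * h) ^ β := by gcongr; linarith
      _ = 2 ^ β * h ^ β := mul_rpow (by norm_num) hh
      _ ≤ _ := by gcongr; linarith

/-- For every `p > 4` there is `C_p > 0` such that for all `0 ≤ s ≤ t` and `x, y ∈ [0,1]`,
`(∫₀ᵗ (∫₀¹ (G_{t−r}(x,z) − G_{s−r}(y,z))² dz)^{p/(p−2)} dr)^{(p−2)/2}
  ≤ C_p (|x−y|^{(p−4)/2} + |t−s|^{(p−4)/4})`. -/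
theorem kernel_Lp_space_time_modulus (p : ℝ) (hp : 4 < p) :
    ∃ C : ℝ, 0 < C ∧ ∀ s t x y : ℝ, 0 ≤ s → s ≤ t →
      x ∈ Set.Icc (0 : ℝ) 1 → y ∈ Set.Icc (0 : ℝ) 1 →
      (∫ r in Set.Icc (0 : ℝ) t,
          (∫ z in Set.Icc (0 : ℝ) 1, (G (t - r) x z - G (s - r) y z) ^ 2) ^ (p / (p - 2)))
            ^ ((p - 2) / 2)
        ≤ C * (|x - y| ^ ((p - 4) / 2) + |t - s| ^ ((p - 4) / 4)) := by
  have hp2 : 0 < p - 2 := by linarith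
  have hq1 : 1 < p / (p - 2) := by rw [lt_div_iff₀ hp2]; linarith
  have hq2 : p / (p - 2) < 2 := by rw [div_lt_iff₀ hp2]; linarith
  set q := p / (p - 2) with hq
  set K := (4 : ℝ) ^ q * (1 / (1 - q / 2) + 1 / (3 * q / 2 - 1)) + 1 / (1 - q / 2) with hK
  have hα : 0 < 1 - q / 2 := by linarith
  have hα' : 0 < 3 * q / 2 - 1 := by linarith
  have hK0 : 0 < K := by positivity
  refine ⟨K ^ ((p - 2) / 2) * 2 ^ ((p - 4) / 4), by positivity, ?_⟩
  intro s t x y _ hst _ _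
  have hI0 : 0 ≤ ∫ r in Set.Icc (0 : ℝ) t,
      (∫ z in Set.Icc (0 : ℝ) 1, (G (t - r) x z - G (s - r) y z) ^ 2) ^ q :=
    integral_nonneg fun r => rpow_nonneg (integral_nonneg fun z => sq_nonneg _) _
  have hh0 : 0 ≤ t - s := by linarith
  rcases eq_or_lt_of_le (show 0 ≤ (t - s) + (x - y) ^ 2 by positivity) with hD | hD
  -- degenerate case `s = t`, `x = y`: the integrand vanishes
  · have hd : (x - y) ^ 2 = 0 := by nlinarith [sq_nonneg (x - y)]
    have hxy : x = y := by have := pow_eq_zero_iff (two_ne_zero) |>.1 hd; linarith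
    have hts : t = s := by linarith
    subst hxy hts
    have : 0 < (p - 2) / 2 := by linarith
    simp only [sub_self, zero_pow two_ne_zero, integral_zero]
    rw [zero_rpow (by linarith), integral_zero, zero_rpow this.ne']
    positivity
  · have hmain := time_integral_bound q s t x y hq1 hq2 hst hD
    rw [← hK] at hmain
    have hexp : (1 - q / 2) * ((p - 2) / 2) = (p - 4) / 4 := by
      rw [hq]; field_simp; ring
    rw [abs_of_nonneg hh0]
    calc _ ≤ (K * ((t - s) + (x - y) ^ 2) ^ (1 - q / 2)) ^ ((p - 2) / 2) :=
          rpow_le_rpow hI0 hmain (by linarith)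
      _ = K ^ ((p - 2) / 2) * ((t - s) + (x - y) ^ 2) ^ ((p - 4) / 4) := by
          rw [mul_rpow hK0.le (by positivity), ← rpow_mul hD.le, hexp]
      _ ≤ K ^ ((p - 2) / 2) * (2 ^ ((p - 4) / 4) *
            (|x - y| ^ (2 * ((p - 4) / 4)) + (t - s) ^ ((p - 4) / 4))) := by
          gcongr
          exact add_sq_rpow_le _ _ _ hh0 (by linarith)
      _ = _ := by
          rw [show 2 * ((p - 4) / 4) = (p - 4) / 2 by ring]; ring
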